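/- Let M > 0 and β ≥ 1 + M/(8π). Then the repulsive free energy F⁺_β attains its infimum on the set of admissible functions f on ℝ² with ∫_{ℝ²} f dx = M: there exists an admissible f₀ with ∫_{ℝ²} f₀ dx = M such that F⁺_β[f₀] ≤ F⁺_β[f] for every admissible f with ∫_{ℝ²} f dx = M. -/

import Mathlib

open MeasureTheory Real Filter

noncomputable section

/-- The Euclidean plane ℝ². -/
abbrev E2 := EuclideanSpace ℝ (Fin 2)

/-- The probability density μ(x) = 1/(π (1+|x|²)²) on ℝ². -/
def mu2 (x : E2) : ℝ := 1 / (π * (1 + ‖x‖ ^ 2) ^ 2)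

/-- The external potential V(x) = −log μ(x) = 2 log(1+|x|²) + log π. -/
def Vpot (x : E2) : ℝ := 2 * Real.log (1 + ‖x‖ ^ 2) + Real.log π

/-- A function f on ℝ² is admissible if it is measurable, nonnegative a.e., integrable,
and ∫ f |log f|, ∫ V f and ∬ f(x) f(y) |log|x−y|| are all finite. -/
def Admissible (f : E2 → ℝ) : Prop :=
  Measurable f ∧ (∀ᵐ x : E2, 0 ≤ f x) ∧ Integrable f ∧
  Integrable (fun x => f x * |Real.log (f x)|) ∧
  Integrable (fun x => Vpot x * f x) ∧
  Integrable (fun p : E2 × E2 => f p.1 * f p.2 * |Real.log ‖p.1 - p.2‖|)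

/-- The repulsive free energy F⁺_β. -/
def Fplus (β : ℝ) (f : E2 → ℝ) : ℝ :=
  (∫ x, f x * Real.log (f x)) + β * (∫ x, Vpot x * f x)
    - (1 / (4 * π)) * ∫ p : E2 × E2, f p.1 * f p.2 * Real.log ‖p.1 - p.2‖

/-- The attractive free energy F⁻_β. -/
def Fminus (β : ℝ) (f : E2 → ℝ) : ℝ :=
  (∫ x, f x * Real.log (f x)) + β * (∫ x, Vpot x * f x)
    + (1 / (4 * π)) * ∫ p : E2 × E2, f p.1 * f p.2 * Real.log ‖p.1 - p.2‖

/-!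
Since `‖x - y‖ ^ 2 ≤ (1 + ‖x‖ ^ 2) * (1 + ‖y‖ ^ 2)`, a part of the confinement proportional to the
mass dominates the logarithmic repulsion at infinity. When enough confinement remains for
`exp (-c * log (1 + ‖x‖ ^ 2))` to be integrable, the free energy at fixed mass is a constant plus
integrals of nonnegative functions, so it is bounded below and, by Fatou's lemma, lower
semicontinuous under a.e. convergence.

Compactness comes from convexity. By Frullani's formula
`-2 * log r = ∫ s in Ioi 0, s⁻¹ * (exp (-(r ^ 2 * s)) - exp (-s))` and the positive definiteness of
Gaussians, the logarithm is a conditionally negative definite kernel, so the repulsive interaction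
is convex at fixed mass. As `t * log t` is strongly convex on bounded intervals with modulus inverse
to the length, the midpoint gap of the free energy controls the square of the `L¹` distance.
Minimizing sequences are therefore Cauchy in `L¹`, and an a.e. convergent subsequence yields a
minimizer.
-/

open scoped ENNReal Topology RealInnerProductSpace

section Entropy

lemma mul_le_mul_log_sub_add_exp {a : ℝ} (ha : 0 ≤ a) (b : ℝ) :
    a * b ≤ a * log a - a + exp b := by
  rcases ha.eq_or_lt with rfl | ha
  · simpa using (exp_pos b).le
  · have h := add_one_le_exp (b - log a)
    rw [exp_sub, exp_log ha, le_div_iff₀ ha] at h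
    linarith

lemma mul_log_add_mul_log_le {a b : ℝ} (ha : 0 ≤ a) (hb : 0 ≤ b) :
    a * log a + b * log b ≤ (a + b) * log (a + b) := by
  have mul_log_le {u v : ℝ} (hu : 0 ≤ u) (huv : u ≤ v) : u * log u ≤ u * log v := by
    rcases hu.eq_or_lt with rfl | hu
    · simp
    · gcongr
  rw [add_mul]
  exact add_le_add (mul_log_le ha (le_add_of_nonneg_right hb))
    (mul_log_le hb (le_add_of_nonneg_left ha))

lemma strongConvexOn_mul_log (K : ℝ) :
    StrongConvexOn (Set.Icc 0 K) K⁻¹ fun x => x * log x := by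
  have hasDeriv {x : ℝ} (hx : x ≠ 0) :
      HasDerivAt (fun x => x * log x - K⁻¹ / 2 * ‖x‖ ^ 2) (log x + 1 - K⁻¹ * x) x := by
    simp only [norm_eq_abs, sq_abs]
    refine ((hasDerivAt_mul_log hx).sub ((hasDerivAt_pow 2 x).const_mul _)).congr_deriv ?_
    push_cast
    ring
  rw [strongConvexOn_iff_convex]
  refine MonotoneOn.convexOn_of_deriv (convex_Icc 0 K)
    (continuous_mul_log.sub (by fun_prop)).continuousOn ?_ ?_ <;> rw [interior_Icc]
  · exact fun x hx => (hasDeriv hx.1.ne').differentiableAt.differentiableWithinAt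
  · intro x hx y hy hxy
    rw [(hasDeriv hx.1.ne').deriv, (hasDeriv hy.1.ne').deriv]
    have hlog : log x - log y ≤ x / y - 1 := by
      rw [← log_div hx.1.ne' hy.1.ne']
      exact log_le_sub_one_of_pos (div_pos hx.1 hy.1)
    have hslope : (y - x) * K⁻¹ ≤ (y - x) * y⁻¹ :=
      mul_le_mul_of_nonneg_left (inv_anti₀ hy.1 hy.2.le) (sub_nonneg.2 hxy)
    have hy' : y * y⁻¹ = 1 := mul_inv_cancel₀ hy.1.ne'
    rw [div_eq_mul_inv] at hlog
    linarith

lemma sq_sub_le_mul_log_midpoint_gap {a b : ℝ} (ha : 0 ≤ a) (hb : 0 ≤ b) :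
    (a - b) ^ 2 ≤ 4 * (a + b) *
      (a * log a + b * log b - 2 * (2⁻¹ * (a + b) * log (2⁻¹ * (a + b)))) := by
  rcases (add_nonneg ha hb).eq_or_lt with h | h
  · obtain ⟨rfl, rfl⟩ := (add_eq_zero_iff_of_nonneg ha hb).1 h.symm
    simp
  have hconv := (strongConvexOn_mul_log (a + b)).2 ⟨ha, by linarith⟩ ⟨hb, by linarith⟩
    (by norm_num : (0 : ℝ) ≤ 2⁻¹) (by norm_num : (0 : ℝ) ≤ 2⁻¹) (by norm_num)
  simp only [smul_eq_mul, norm_eq_abs, sq_abs, ← mul_add] at hconv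
  calc (a - b) ^ 2
      = 4 * (a + b) * (4⁻¹ * (a + b)⁻¹ * (a - b) ^ 2) := by field_simp
    _ ≤ _ := by gcongr; linarith

variable {α : Type*} [MeasurableSpace α] {μ : Measure α} {f g : α → ℝ}

lemma integrable_mul_log_midpoint (hf : Integrable f μ) (hg : Integrable g μ)
    (hf0 : 0 ≤ᵐ[μ] f) (hg0 : 0 ≤ᵐ[μ] g) (hf' : Integrable (fun x => f x * log (f x)) μ)
    (hg' : Integrable (fun x => g x * log (g x)) μ) :
    Integrable (fun x => 2⁻¹ * (f x + g x) * log (2⁻¹ * (f x + g x))) μ := by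
  have hmean : Integrable (fun x => 2⁻¹ * (f x * log (f x) + g x * log (g x))) μ :=
    (hf'.add hg').const_mul _
  refine integrable_of_le_of_le
    (continuous_mul_log.comp_aestronglyMeasurable ((hf.add hg).const_mul 2⁻¹).1)
    ?_ ?_ (hmean.sub ((hf.add hg).const_mul (2⁻¹ * log 2))) hmean
  · filter_upwards [hf0, hg0] with x hfx hgx
    have hhalf : 2⁻¹ * (f x + g x) * log (2⁻¹ * (f x + g x)) =
        2⁻¹ * ((f x + g x) * log (f x + g x)) - 2⁻¹ * log 2 * (f x + g x) := by
      rcases (add_nonneg hfx hgx).eq_or_lt with h | h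
      · simp [← h]
      · rw [log_mul (by norm_num) h.ne', log_inv]
        ring
    have := mul_log_add_mul_log_le hfx hgx
    simp only [Pi.sub_apply, Pi.add_apply]
    linarith
  · filter_upwards [hf0, hg0] with x hfx hgx
    have := convexOn_mul_log.2 hfx hgx (by norm_num : (0 : ℝ) ≤ 2⁻¹)
      (by norm_num : (0 : ℝ) ≤ 2⁻¹) (by norm_num)
    simpa only [smul_eq_mul, ← mul_add] using this

lemma sq_integral_abs_sub_le_mul_log_midpoint_gap (hf : Integrable f μ) (hg : Integrable g μ)
    (hf0 : 0 ≤ᵐ[μ] f) (hg0 : 0 ≤ᵐ[μ] g) (hf' : Integrable (fun x => f x * log (f x)) μ)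
    (hg' : Integrable (fun x => g x * log (g x)) μ) :
    (∫ x, |f x - g x| ∂μ) ^ 2 ≤ 4 * ((∫ x, f x ∂μ) + ∫ x, g x ∂μ) *
      ((∫ x, f x * log (f x) ∂μ) + (∫ x, g x * log (g x) ∂μ) -
        2 * ∫ x, 2⁻¹ * (f x + g x) * log (2⁻¹ * (f x + g x)) ∂μ) := by
  set gap : α → ℝ := fun x => f x * log (f x) + g x * log (g x) -
    2 * (2⁻¹ * (f x + g x) * log (2⁻¹ * (f x + g x))) with gap_def
  have hmid := (integrable_mul_log_midpoint hf hg hf0 hg0 hf' hg').const_mul 2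
  have hgap : Integrable gap μ := (hf'.add hg').sub hmid
  have hgap_integral : ∫ x, gap x ∂μ = (∫ x, f x * log (f x) ∂μ) + (∫ x, g x * log (g x) ∂μ) -
      2 * ∫ x, 2⁻¹ * (f x + g x) * log (2⁻¹ * (f x + g x)) ∂μ := by
    rw [gap_def, integral_sub (by exact hf'.add hg') hmid, integral_add hf' hg', integral_const_mul]
  -- Cauchy–Schwarz: integrate the pointwise quadratic in `t` and take its discriminant.
  have pointwise (t : ℝ) : ∀ᵐ x ∂μ, 0 ≤ (f x + g x) * (t * t) + -|f x - g x| * t + gap x := by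
    filter_upwards [hf0, hg0] with x hfx hgx
    have hsq : (f x - g x) ^ 2 ≤ 4 * (f x + g x) * gap x := sq_sub_le_mul_log_midpoint_gap hfx hgx
    rcases (add_nonneg hfx hgx).eq_or_lt with h | h
    · simp only [Pi.zero_apply] at hfx hgx h
      obtain ⟨hf, hg⟩ := (add_eq_zero_iff_of_nonneg hfx hgx).1 h.symm
      simp [gap_def, hf, hg]
    · refine nonneg_of_mul_nonneg_right (a := 4 * (f x + g x)) ?_ (by linarith)
      linarith [sq_nonneg (2 * (f x + g x) * t - |f x - g x|), sq_abs (f x - g x)]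
  have hdiscrim := discrim_le_zero (a := (∫ x, f x ∂μ) + ∫ x, g x ∂μ) (b := -∫ x, |f x - g x| ∂μ)
    (c := ∫ x, gap x ∂μ) fun t => by
      have hsum : Integrable (fun x => (f x + g x) * (t * t)) μ := (hf.add hg).mul_const _
      have hdiff : Integrable (fun x => -|f x - g x| * t) μ := (hf.sub hg).abs.neg.mul_const _
      rw [← integral_add hf hg, ← integral_neg, ← integral_mul_const, ← integral_mul_const,
        ← integral_add hsum hdiff, ← integral_add (by exact hsum.add hdiff) hgap]
      exact integral_nonneg_of_ae (pointwise t)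
  rw [discrim, neg_sq, hgap_integral] at hdiscrim
  linarith

end Entropy

section LogKernel

lemma abs_exp_neg_sub_exp_neg_le (u v : ℝ) :
    |exp (-u) - exp (-v)| ≤ |u - v| * exp (-min u v) := by
  wlog huv : u ≤ v generalizing u v
  · rw [abs_sub_comm, abs_sub_comm u, min_comm]
    exact this v u (le_of_not_ge huv)
  have hfactor : exp (-u) - exp (-v) = (1 - exp (u - v)) * exp (-u) := by
    rw [sub_mul, one_mul, ← exp_add]
    ring_nf
  rw [min_eq_left huv, hfactor, abs_mul, abs_of_pos (exp_pos (-u)), abs_sub_comm u,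
    abs_of_nonneg (sub_nonneg.2 (exp_le_one_iff.2 (sub_nonpos.2 huv))),
    abs_of_nonneg (sub_nonneg.2 huv)]
  refine mul_le_mul_of_nonneg_right ?_ (exp_pos _).le
  linarith [add_one_le_exp (u - v)]

lemma integrableOn_inv_mul_exp_neg_mul_sub_exp_neg {a : ℝ} (ha : 0 < a) :
    IntegrableOn (fun s : ℝ => s⁻¹ * (exp (-(a * s)) - exp (-s))) (Set.Ioi 0) := by
  have hdecay : IntegrableOn (fun s : ℝ => exp (-(min a 1 * s))) (Set.Ioi 0) :=
    (integrableOn_Ioi_comp_mul_left_iff (fun x => exp (-x)) 0 (lt_min ha one_pos)).2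
      (by simpa using integrableOn_exp_neg_Ioi 0)
  refine (hdecay.const_mul |a - 1|).mono' (by fun_prop) ?_
  filter_upwards [ae_restrict_mem measurableSet_Ioi] with s hs
  have hs : 0 < s := hs
  have hmin : min (a * s) s = min a 1 * s := by rw [min_mul_of_nonneg _ _ hs.le, one_mul]
  rw [norm_mul, norm_inv, norm_eq_abs, norm_eq_abs, abs_of_pos hs, inv_mul_le_iff₀ hs]
  calc |exp (-(a * s)) - exp (-s)| ≤ |a * s - s| * exp (-min (a * s) s) :=
        abs_exp_neg_sub_exp_neg_le _ _
    _ = s * (|a - 1| * exp (-(min a 1 * s))) := by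
        rw [hmin, ← sub_one_mul, abs_mul, abs_of_pos hs]
        ring

lemma integral_inv_mul_exp_neg_mul_sub_exp_neg {a : ℝ} (ha : 0 < a) :
    ∫ s in Set.Ioi (0 : ℝ), s⁻¹ * (exp (-(a * s)) - exp (-s)) = -log a := by
  have hcont : Continuous fun x : ℝ => exp (-x) := by fun_prop
  have hzero : Tendsto (fun x : ℝ => exp (-x)) (𝓝 0) (𝓝 1) := by simpa using hcont.tendsto 0
  simpa using Frullani.integral_Ioi_eq (hcont.locallyIntegrable.locallyIntegrableOn _) ha one_pos
    (hzero.mono_left nhdsWithin_le_nhds) tendsto_exp_neg_atTop_nhds_zero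
    (by simpa using integrableOn_inv_mul_exp_neg_mul_sub_exp_neg ha)

lemma integral_norm_inv_mul_exp_neg_mul_sub_exp_neg {a : ℝ} (ha : 0 < a) :
    ∫ s in Set.Ioi (0 : ℝ), ‖s⁻¹ * (exp (-(a * s)) - exp (-s))‖ = |log a| := by
  rcases le_total a 1 with h | h
  · rw [abs_of_nonpos (log_nonpos ha.le h), ← integral_inv_mul_exp_neg_mul_sub_exp_neg ha]
    refine setIntegral_congr_fun measurableSet_Ioi fun s (hs : 0 < s) => ?_
    refine Real.norm_of_nonneg (mul_nonneg (inv_nonneg.2 hs.le) (sub_nonneg.2 ?_))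
    exact exp_le_exp.2 (neg_le_neg (mul_le_of_le_one_left hs.le h))
  · rw [abs_of_nonneg (log_nonneg h), ← neg_neg (log a),
      ← integral_inv_mul_exp_neg_mul_sub_exp_neg ha, ← integral_neg]
    refine setIntegral_congr_fun measurableSet_Ioi fun s (hs : 0 < s) => ?_
    refine Real.norm_of_nonpos (mul_nonpos_of_nonneg_of_nonpos (inv_nonneg.2 hs.le)
      (sub_nonpos.2 ?_))
    exact exp_le_exp.2 (neg_le_neg (le_mul_of_one_le_left hs.le h))

variable {E : Type*} [NormedAddCommGroup E] [InnerProductSpace ℝ E] [FiniteDimensional ℝ E]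
  [MeasurableSpace E] [BorelSpace E] {μ : Measure E} [SFinite μ] {h : E → ℝ}

lemma re_charFun (ν : Measure E) [IsFiniteMeasure ν] (t : E) :
    (charFun ν t).re = ∫ z, cos ⟪z, t⟫ ∂ν := by
  have hint : Integrable (fun z => Complex.exp (⟪z, t⟫ * Complex.I)) ν :=
    .of_bound (by fun_prop) 1 (.of_forall fun z => (Complex.norm_exp_ofReal_mul_I _).le)
  rw [charFun_apply]
  refine (integral_re hint).symm.trans (integral_congr_ae (.of_forall fun z => ?_))
  exact Complex.exp_ofReal_mul_I_re _

lemma integral_mul_mul_cos_inner_sub_nonneg (hh : Integrable h μ) (z : E) :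
    0 ≤ ∫ p, h p.1 * h p.2 * cos ⟪z, p.1 - p.2⟫ ∂μ.prod μ := by
  have hcos : Integrable (fun x => h x * cos ⟪z, x⟫) μ :=
    hh.mul_bdd (c := 1) (by fun_prop) (.of_forall fun x => abs_cos_le_one _)
  have hsin : Integrable (fun x => h x * sin ⟪z, x⟫) μ :=
    hh.mul_bdd (c := 1) (by fun_prop) (.of_forall fun x => abs_sin_le_one _)
  calc (0 : ℝ) ≤ (∫ x, h x * cos ⟪z, x⟫ ∂μ) * (∫ x, h x * cos ⟪z, x⟫ ∂μ) +
        (∫ x, h x * sin ⟪z, x⟫ ∂μ) * ∫ x, h x * sin ⟪z, x⟫ ∂μ :=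
        add_nonneg (mul_self_nonneg _) (mul_self_nonneg _)
    _ = _ := by
        rw [← integral_prod_mul, ← integral_prod_mul,
          ← integral_add (hcos.mul_prod hcos) (hsin.mul_prod hsin)]
        congr 1 with p
        rw [inner_sub_right, cos_sub]
        ring

lemma integral_mul_mul_re_charFun_sub_nonneg (ν : Measure E) [IsFiniteMeasure ν]
    (hh : Integrable h μ) :
    0 ≤ ∫ p, h p.1 * h p.2 * (charFun ν (p.1 - p.2)).re ∂μ.prod μ := by
  have hint : Integrable (fun q : (E × E) × E => h q.1.1 * h q.1.2 * cos ⟪q.2, q.1.1 - q.1.2⟫)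
      ((μ.prod μ).prod ν) :=
    ((hh.mul_prod hh).comp_fst ν).mul_bdd (c := 1) (by fun_prop)
      (.of_forall fun q => abs_cos_le_one _)
  simp_rw [re_charFun, ← integral_const_mul]
  rw [integral_integral_swap hint]
  exact integral_nonneg fun z => integral_mul_mul_cos_inner_sub_nonneg hh z

lemma integral_mul_mul_exp_neg_sq_norm_sub_nonneg (hh : Integrable h μ) {s : ℝ} (hs : 0 ≤ s) :
    0 ≤ ∫ p, h p.1 * h p.2 * exp (-(‖p.1 - p.2‖ ^ 2 * s)) ∂μ.prod μ := by
  let ν := (ProbabilityTheory.stdGaussian E).map (√(2 * s) • ·)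
  have hν (t : E) : exp (-(‖t‖ ^ 2 * s)) = (charFun ν t).re := by
    rw [charFun_map_smul, ProbabilityTheory.charFun_stdGaussian, norm_smul, norm_eq_abs,
      abs_of_nonneg (sqrt_nonneg _), ← Complex.ofReal_pow, mul_pow, sq_sqrt (by positivity),
      mul_assoc, mul_comm s, ← Complex.ofReal_neg]
    norm_cast
    congr 1
    ring
  simp_rw [hν]
  exact integral_mul_mul_re_charFun_sub_nonneg ν hh

lemma ae_prod_fst_ne_snd {α : Type*} [MeasurableSpace α] [MeasurableEq α] {μ : Measure α}
    [SFinite μ] [NullSingletonClass μ] : ∀ᵐ p ∂μ.prod μ, p.1 ≠ p.2 := by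
  refine measure_mono_null (t := Set.diagonal α) (fun p hp => not_not.1 hp)
    ((Measure.measure_prod_null measurableSet_diagonal).2 (.of_forall fun x => ?_))
  refine measure_mono_null (fun y hy => ?_) (measure_singleton x)
  exact (Set.mem_diagonal_iff.1 hy).symm

variable [NullSingletonClass μ]

lemma integrable_uncurry_mul_mul_inv_mul_exp_sub_exp (hh : Integrable h μ)
    (hlog : Integrable (fun p : E × E => h p.1 * h p.2 * log ‖p.1 - p.2‖) (μ.prod μ)) :
    Integrable (Function.uncurry fun (p : E × E) s =>
        h p.1 * h p.2 * (s⁻¹ * (exp (-(‖p.1 - p.2‖ ^ 2 * s)) - exp (-s))))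
      ((μ.prod μ).prod (volume.restrict (Set.Ioi 0))) := by
  rw [integrable_prod_iff (by exact (hh.mul_prod hh).1.comp_fst.mul (by fun_prop))]
  refine ⟨?_, (hlog.norm.const_mul 2).congr ?_⟩
  · filter_upwards [ae_prod_fst_ne_snd] with p hp
    have hp : 0 < ‖p.1 - p.2‖ := norm_pos_iff.2 (sub_ne_zero.2 hp)
    exact (integrableOn_inv_mul_exp_neg_mul_sub_exp_neg (pow_pos hp 2)).const_mul (h p.1 * h p.2)
  · filter_upwards [ae_prod_fst_ne_snd] with p hp
    have hp : 0 < ‖p.1 - p.2‖ := norm_pos_iff.2 (sub_ne_zero.2 hp)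
    simp_rw [Function.uncurry_apply_pair, norm_mul (h p.1 * h p.2)]
    rw [integral_const_mul, integral_norm_inv_mul_exp_neg_mul_sub_exp_neg (by positivity), log_pow,
      abs_mul, norm_eq_abs (log _), Nat.abs_cast, Nat.cast_ofNat, mul_left_comm]

lemma integral_mul_mul_log_norm_sub_nonpos (hh : Integrable h μ) (hzero : ∫ x, h x ∂μ = 0)
    (hlog : Integrable (fun p : E × E => h p.1 * h p.2 * log ‖p.1 - p.2‖) (μ.prod μ)) :
    ∫ p, h p.1 * h p.2 * log ‖p.1 - p.2‖ ∂μ.prod μ ≤ 0 := by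
  let K : E × E → ℝ → ℝ := fun p s => s⁻¹ * (exp (-(‖p.1 - p.2‖ ^ 2 * s)) - exp (-s))
  have hKlog : ∫ p, (∫ s in Set.Ioi 0, h p.1 * h p.2 * K p s) ∂μ.prod μ =
      -2 * ∫ p, h p.1 * h p.2 * log ‖p.1 - p.2‖ ∂μ.prod μ := by
    rw [← integral_const_mul]
    refine integral_congr_ae ?_
    filter_upwards [ae_prod_fst_ne_snd] with p hp
    have hp : 0 < ‖p.1 - p.2‖ := norm_pos_iff.2 (sub_ne_zero.2 hp)
    rw [integral_const_mul, integral_inv_mul_exp_neg_mul_sub_exp_neg (by positivity), log_pow]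
    push_cast
    ring
  have hKnonneg (s : ℝ) (hs : 0 < s) : 0 ≤ ∫ p, h p.1 * h p.2 * K p s ∂μ.prod μ := by
    have hexp : Integrable (fun p : E × E => h p.1 * h p.2 * exp (-(‖p.1 - p.2‖ ^ 2 * s)))
        (μ.prod μ) :=
      (hh.mul_prod hh).mul_bdd (c := 1) (by fun_prop) (.of_forall fun p => by
        rw [Real.norm_of_nonneg (exp_pos _).le, exp_le_one_iff, neg_nonpos]
        positivity)
    have hexpand (p : E × E) : h p.1 * h p.2 * K p s =
        s⁻¹ * (h p.1 * h p.2 * exp (-(‖p.1 - p.2‖ ^ 2 * s)) - exp (-s) * (h p.1 * h p.2)) := by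
      ring
    simp_rw [hexpand]
    rw [integral_const_mul, integral_sub hexp ((hh.mul_prod hh).const_mul _), integral_const_mul,
      integral_prod_mul, hzero, zero_mul, mul_zero, sub_zero]
    exact mul_nonneg (inv_nonneg.2 hs.le) (integral_mul_mul_exp_neg_sq_norm_sub_nonneg hh hs.le)
  have hswap := integral_integral_swap (integrable_uncurry_mul_mul_inv_mul_exp_sub_exp hh hlog)
  have := setIntegral_nonneg (μ := volume) measurableSet_Ioi hKnonneg
  rw [← hswap, hKlog] at this
  linarith

end LogKernel

section FiniteEntropyMoment

variable {E : Type*} [NormedAddCommGroup E]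

/-- The weight `log (1 + ‖x‖²)`, which measures confinement at infinity. -/
def logWeight (x : E) : ℝ := log (1 + ‖x‖ ^ 2)

lemma logWeight_nonneg (x : E) : 0 ≤ logWeight x :=
  log_nonneg (le_add_of_nonneg_right (sq_nonneg _))

@[fun_prop]
lemma continuous_logWeight : Continuous (logWeight : E → ℝ) :=
  .log (by fun_prop) fun x => by positivity

lemma exp_neg_mul_logWeight (c : ℝ) (x : E) : exp (-(c * logWeight x)) = (1 + ‖x‖ ^ 2) ^ (-c) := by
  rw [rpow_def_of_pos (by positivity), logWeight]
  ring_nf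

lemma log_norm_sub_le_logWeight {x y : E} (hxy : x ≠ y) :
    log ‖x - y‖ ≤ 2⁻¹ * (logWeight x + logWeight y) := by
  have hpos : 0 < ‖x - y‖ := norm_pos_iff.2 (sub_ne_zero.2 hxy)
  have hsq : ‖x - y‖ ^ 2 ≤ (1 + ‖x‖ ^ 2) * (1 + ‖y‖ ^ 2) :=
    calc ‖x - y‖ ^ 2 ≤ (‖x‖ + ‖y‖) ^ 2 := by gcongr; exact norm_sub_le x y
      _ ≤ (1 + ‖x‖ ^ 2) * (1 + ‖y‖ ^ 2) := by linarith [sq_nonneg (1 - ‖x‖ * ‖y‖)]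
  have hlog := log_le_log (by positivity) hsq
  rw [log_pow, log_mul (by positivity) (by positivity)] at hlog
  push_cast at hlog
  simp only [logWeight]
  linarith

lemma mul_abs_log_norm_sub_le {a : ℝ} (ha : 0 ≤ a) {x y : E} (hxy : x ≠ y) :
    a * |log ‖x - y‖| ≤ 2 * |a * log a| +
      2 * (Metric.ball (0 : E) 1).indicator (fun z => ‖z‖ ^ (-2⁻¹ : ℝ)) (x - y) +
      a * (2⁻¹ * (logWeight x + logWeight y)) := by
  have hpos : 0 < ‖x - y‖ := norm_pos_iff.2 (sub_ne_zero.2 hxy)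
  have hweight : 0 ≤ a * (2⁻¹ * (logWeight x + logWeight y)) :=
    mul_nonneg ha (mul_nonneg (by norm_num) (add_nonneg (logWeight_nonneg x) (logWeight_nonneg y)))
  rcases lt_or_ge ‖x - y‖ 1 with h | h
  · -- Young's inequality trades the singularity for entropy and an integrable power of `‖x - y‖`.
    have hyoung := mul_le_mul_log_sub_add_exp ha (log ‖x - y‖ * -2⁻¹)
    rw [← rpow_def_of_pos hpos] at hyoung
    rw [Set.indicator_of_mem (mem_ball_zero_iff.2 h), abs_of_nonpos (log_nonpos hpos.le h.le)]
    linarith [le_abs_self (a * log a)]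
  · rw [Set.indicator_of_notMem (by simpa using h), abs_of_nonneg (log_nonneg h)]
    linarith [mul_le_mul_of_nonneg_left (log_norm_sub_le_logWeight hxy) ha,
      abs_nonneg (a * log a)]

variable [MeasurableSpace E] {μ : Measure E} {f g : E → ℝ}

/-- Nonnegative densities with finite mass, entropy and logarithmic moment. On these the
logarithmic interaction energy is automatically finite. -/
structure FiniteEntropyMoment (μ : Measure E) (f : E → ℝ) : Prop where
  measurable : Measurable f
  nonneg : 0 ≤ᵐ[μ] f
  integrable : Integrable f μ
  entropy : Integrable (fun x => f x * log (f x)) μ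
  moment : Integrable (fun x => logWeight x * f x) μ

lemma FiniteEntropyMoment.midpoint (hf : FiniteEntropyMoment μ f) (hg : FiniteEntropyMoment μ g) :
    FiniteEntropyMoment μ fun x => 2⁻¹ * (f x + g x) where
  measurable := (hf.measurable.add hg.measurable).const_mul _
  nonneg := by
    filter_upwards [hf.nonneg, hg.nonneg] with x hfx hgx
    exact mul_nonneg (by norm_num) (add_nonneg hfx hgx)
  integrable := (hf.integrable.add hg.integrable).const_mul _
  entropy := integrable_mul_log_midpoint hf.integrable hg.integrable hf.nonneg hg.nonneg
    hf.entropy hg.entropy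
  moment := ((hf.moment.add hg.moment).const_mul 2⁻¹).congr
    (.of_forall fun x => by simp only [Pi.add_apply]; ring)

/-- The densities with finite entropy and logarithmic moment whose total mass is `M`, over which
the free energy is minimized. -/
def densitiesOfMass (μ : Measure E) (M : ℝ) : Set (E → ℝ) :=
  {f | FiniteEntropyMoment μ f ∧ ∫ x, f x ∂μ = M}

variable {M : ℝ}

lemma midpoint_mem_densitiesOfMass (hf : f ∈ densitiesOfMass μ M)
    (hg : g ∈ densitiesOfMass μ M) : (fun x => 2⁻¹ * (f x + g x)) ∈ densitiesOfMass μ M := by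
  refine ⟨hf.1.midpoint hg.1, ?_⟩
  rw [integral_const_mul, integral_add hf.1.integrable hg.1.integrable, hf.2, hg.2]
  ring

variable [BorelSpace E] [NormedSpace ℝ E] [FiniteDimensional ℝ E]

lemma densitiesOfMass_nonempty (μ : Measure E) [μ.IsAddHaarMeasure] (hM : 0 ≤ M) :
    (densitiesOfMass μ M).Nonempty := by
  let B := Metric.closedBall (0 : E) 1
  have hB : MeasurableSet B := measurableSet_closedBall
  have hBpos : 0 < μ.real B :=
    ENNReal.toReal_pos (Metric.measure_closedBall_pos _ _ one_pos).ne' measure_closedBall_lt_top.ne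
  have hind {φ : E → ℝ} (hφ : Continuous φ) : Integrable (B.indicator φ) μ :=
    (integrable_indicator_iff hB).2
      (hφ.continuousOn.integrableOn_compact (isCompact_closedBall _ _))
  let c := M / μ.real B
  refine ⟨B.indicator fun _ => c, ?_, ?_⟩
  · exact {
      measurable := measurable_const.indicator hB
      nonneg := .of_forall (Set.indicator_nonneg fun _ _ => by positivity)
      integrable := hind continuous_const
      entropy := (hind (continuous_const (y := c * log c))).congr
        (.of_forall fun x => by by_cases hx : x ∈ B <;> simp [hx])
      moment := (hind (continuous_logWeight.mul (continuous_const (y := c)))).congr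
        (.of_forall fun x => by by_cases hx : x ∈ B <;> simp [hx]) }
  · rw [integral_indicator hB, setIntegral_const, smul_eq_mul]
    exact mul_div_cancel₀ _ hBpos.ne'

variable [Nontrivial E] [μ.IsAddHaarMeasure]

lemma integrable_indicator_ball_norm_rpow_neg_half :
    Integrable ((Metric.ball (0 : E) 1).indicator fun z => ‖z‖ ^ (-2⁻¹ : ℝ)) μ := by
  rw [integrable_indicator_iff measurableSet_ball,
    integrableOn_fun_norm_addHaar μ (f := fun r => r ^ (-2⁻¹ : ℝ))]
  have hrpow : IntegrableOn (fun r : ℝ => r ^ (-2⁻¹ : ℝ)) (Set.Ioo 0 1) :=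
    (intervalIntegral.integrableOn_Ioo_rpow_iff one_pos).2 (by norm_num)
  refine hrpow.mono' (by fun_prop) ?_
  filter_upwards [ae_restrict_mem measurableSet_Ioo] with r hr
  rw [norm_smul, norm_pow, Real.norm_of_nonneg hr.1.le, Real.norm_of_nonneg (rpow_nonneg hr.1.le _)]
  exact mul_le_of_le_one_left (rpow_nonneg hr.1.le _) (pow_le_one₀ hr.1.le hr.2.le)

lemma FiniteEntropyMoment.integrable_interaction (hf : FiniteEntropyMoment μ f)
    (hg : FiniteEntropyMoment μ g) :
    Integrable (fun p : E × E => f p.1 * g p.2 * log ‖p.1 - p.2‖) (μ.prod μ) := by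
  have := hf.measurable
  have := hg.measurable
  have hentropy := hf.entropy.abs.mul_prod hg.integrable
  have hsingular : Integrable (fun p : E × E =>
      g p.2 * (Metric.ball (0 : E) 1).indicator (fun z => ‖z‖ ^ (-2⁻¹ : ℝ)) (p.1 - p.2))
      (μ.prod μ) :=
    hg.integrable.convolution_integrand (.mul ℝ ℝ) integrable_indicator_ball_norm_rpow_neg_half
  have hmoment_left := hf.moment.mul_prod hg.integrable
  have hmoment_right := hf.integrable.mul_prod hg.moment
  refine (((hentropy.const_mul 2).add (hsingular.const_mul 2)).add
    ((hmoment_left.add hmoment_right).const_mul 2⁻¹)).mono' (by fun_prop) ?_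
  filter_upwards [Measure.quasiMeasurePreserving_fst.ae hf.nonneg,
    Measure.quasiMeasurePreserving_snd.ae hg.nonneg, ae_prod_fst_ne_snd] with p hfp hgp hp
  rw [norm_mul, norm_mul, Real.norm_of_nonneg hfp, Real.norm_of_nonneg hgp, Real.norm_eq_abs]
  have := mul_le_mul_of_nonneg_left (mul_abs_log_norm_sub_le hfp hp) hgp
  simp only [Pi.add_apply]
  linarith

end FiniteEntropyMoment

section FreeEnergy

variable {E : Type*} [NormedAddCommGroup E] [MeasurableSpace E]

/-- The logarithmic interaction energy `∬ f(x) f(y) log ‖x - y‖`, with respect to `μ`. -/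
def logInteraction (μ : Measure E) (f : E → ℝ) : ℝ :=
  ∫ p, f p.1 * f p.2 * log ‖p.1 - p.2‖ ∂μ.prod μ

/-- The free energy with confining potential `a log (1 + ‖x‖²)` and a logarithmic interaction of
strength `b`, which is repulsive for `0 ≤ b`. -/
def logFreeEnergy (μ : Measure E) (a b : ℝ) (f : E → ℝ) : ℝ :=
  (∫ x, f x * log (f x) ∂μ) + a * (∫ x, logWeight x * f x ∂μ) - b * logInteraction μ f

/-- The local part of the free energy with confinement `κ`, made nonnegative for `c ≤ κ` by an
additive normalization that is constant on densities of fixed mass. -/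
def localEnergy (c κ : ℝ) (f : E → ℝ) (x : E) : ℝ :=
  f x * log (f x) + κ * (logWeight x * f x) - f x + exp (-(c * logWeight x))

/-- The logarithmic repulsion, screened by enough confinement to make it nonnegative. -/
def screenedInteraction (f : E → ℝ) (p : E × E) : ℝ :=
  f p.1 * f p.2 * (2⁻¹ * (logWeight p.1 + logWeight p.2) - log ‖p.1 - p.2‖)

/-- The sum of the local energy and `b` times the screened interaction. For densities of mass `M`
and `κ = a - b * M` it is the free energy `logFreeEnergy μ a b` up to an additive constant. -/
def confinedEnergy (μ : Measure E) (b c κ : ℝ) (f : E → ℝ) : ℝ≥0∞ :=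
  (∫⁻ x, ENNReal.ofReal (localEnergy c κ f x) ∂μ) +
    ∫⁻ p, ENNReal.ofReal (b * screenedInteraction f p) ∂μ.prod μ

variable {μ : Measure E} {f g : E → ℝ} {a b c κ M : ℝ}

omit [MeasurableSpace E] in
lemma sub_mul_le_localEnergy {x : E} (hfx : 0 ≤ f x) :
    (κ - c) * (logWeight x * f x) ≤ localEnergy c κ f x := by
  have := mul_le_mul_log_sub_add_exp hfx (-(c * logWeight x))
  simp only [localEnergy]
  linarith

omit [MeasurableSpace E] in
lemma localEnergy_nonneg (hκ : c ≤ κ) {x : E} (hfx : 0 ≤ f x) : 0 ≤ localEnergy c κ f x :=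
  (mul_nonneg (sub_nonneg.2 hκ) (mul_nonneg (logWeight_nonneg x) hfx)).trans
    (sub_mul_le_localEnergy hfx)

lemma screenedInteraction_nonneg [MeasurableEq E] [SFinite μ] [NullSingletonClass μ]
    (hf : 0 ≤ᵐ[μ] f) : 0 ≤ᵐ[μ.prod μ] screenedInteraction f := by
  filter_upwards [Measure.quasiMeasurePreserving_fst.ae hf,
    Measure.quasiMeasurePreserving_snd.ae hf, ae_prod_fst_ne_snd] with p hfx hfy hp
  exact mul_nonneg (mul_nonneg hfx hfy) (sub_nonneg.2 (log_norm_sub_le_logWeight hp))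

lemma lintegral_ofReal_le_liminf {α : Type*} [MeasurableSpace α] {μ : Measure α}
    {u : ℕ → α → ℝ} {v : α → ℝ} (hu : ∀ n, AEMeasurable (u n) μ)
    (huv : ∀ᵐ x ∂μ, Tendsto (fun n => u n x) atTop (𝓝 (v x))) :
    ∫⁻ x, ENNReal.ofReal (v x) ∂μ ≤ liminf (fun n => ∫⁻ x, ENNReal.ofReal (u n x) ∂μ) atTop := by
  refine (lintegral_congr_ae ?_).trans_le (lintegral_liminf_le' fun n => (hu n).ennreal_ofReal)
  filter_upwards [huv] with x hx
  exact (ENNReal.tendsto_ofReal hx).liminf_eq.symm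

lemma liminf_add_liminf_le_liminf_add (u v : ℕ → ℝ≥0∞) :
    liminf u atTop + liminf v atTop ≤ liminf (fun n => u n + v n) atTop := by
  have hmono (w : ℕ → ℝ≥0∞) : Monotone fun n => ⨅ i ≥ n, w i := fun _ _ hmn =>
    le_iInf₂ fun i hi => iInf₂_le i (hmn.trans hi)
  simp only [liminf_eq_iSup_iInf_of_nat]
  rw [ENNReal.iSup_add_iSup_of_monotone (hmono u) (hmono v)]
  exact iSup_mono fun n => le_iInf₂ fun i hi => add_le_add (iInf₂_le i hi) (iInf₂_le i hi)

lemma confinedEnergy_le_liminf [BorelSpace E] [SecondCountableTopology E]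
    {f : ℕ → E → ℝ} (hf : ∀ n, Measurable (f n))
    (hfg : ∀ᵐ x ∂μ, Tendsto (fun n => f n x) atTop (𝓝 (g x))) :
    confinedEnergy μ b c κ g ≤ liminf (fun n => confinedEnergy μ b c κ (f n)) atTop := by
  have hlocal : ∀ᵐ x ∂μ, Tendsto (fun n => localEnergy c κ (f n) x) atTop
      (𝓝 (localEnergy c κ g x)) := by
    filter_upwards [hfg] with x hx
    exact (((continuous_mul_log.tendsto _).comp hx).add
      ((hx.const_mul _).const_mul _)).sub hx |>.add_const _
  have hscreened : ∀ᵐ p ∂μ.prod μ, Tendsto (fun n => b * screenedInteraction (f n) p) atTop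
      (𝓝 (b * screenedInteraction g p)) := by
    filter_upwards [Measure.quasiMeasurePreserving_fst.ae hfg,
      Measure.quasiMeasurePreserving_snd.ae hfg] with p hx hy
    exact ((hx.mul hy).mul_const _).const_mul _
  have hlocal_meas (n : ℕ) : Measurable (localEnergy c κ (f n)) := by
    have := hf n
    unfold localEnergy
    fun_prop
  have hscreened_meas (n : ℕ) : Measurable fun p => b * screenedInteraction (f n) p := by
    have := hf n
    unfold screenedInteraction
    fun_prop
  simp only [confinedEnergy]
  refine (add_le_add
    (lintegral_ofReal_le_liminf (fun n => (hlocal_meas n).aemeasurable) hlocal)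
    (lintegral_ofReal_le_liminf (fun n => (hscreened_meas n).aemeasurable) hscreened)).trans ?_
  exact liminf_add_liminf_le_liminf_add _ _

section Haar

variable [NormedSpace ℝ E] [FiniteDimensional ℝ E] [BorelSpace E] [μ.IsAddHaarMeasure]

open Module (finrank)

lemma integrable_exp_neg_mul_logWeight (hc : (finrank ℝ E : ℝ) / 2 < c) :
    Integrable (fun x => exp (-(c * logWeight x))) μ := by
  simp_rw [exp_neg_mul_logWeight]
  have := integrable_rpow_neg_one_add_norm_sq (E := E) (μ := μ) (r := 2 * c) (by linarith)
  simpa [neg_div] using this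

lemma FiniteEntropyMoment.integrable_localEnergy (hf : FiniteEntropyMoment μ f)
    (hc : (finrank ℝ E : ℝ) / 2 < c) : Integrable (localEnergy c κ f) μ :=
  ((hf.entropy.add (hf.moment.const_mul _)).sub hf.integrable).add
    (integrable_exp_neg_mul_logWeight hc)

lemma FiniteEntropyMoment.integral_localEnergy (hf : FiniteEntropyMoment μ f)
    (hc : (finrank ℝ E : ℝ) / 2 < c) :
    ∫ x, localEnergy c κ f x ∂μ = (∫ x, f x * log (f x) ∂μ) +
      κ * (∫ x, logWeight x * f x ∂μ) - (∫ x, f x ∂μ) + ∫ x, exp (-(c * logWeight x)) ∂μ := by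
  have hpotential := hf.entropy.add (hf.moment.const_mul κ)
  simp only [localEnergy]
  rw [integral_add (by exact hpotential.sub hf.integrable) (integrable_exp_neg_mul_logWeight hc),
    integral_sub (by exact hpotential) hf.integrable,
    integral_add hf.entropy (hf.moment.const_mul κ), integral_const_mul]

variable [Nontrivial E]

lemma FiniteEntropyMoment.integrable_screenedInteraction (hf : FiniteEntropyMoment μ f) :
    Integrable (screenedInteraction f) (μ.prod μ) := by
  refine ((((hf.moment.mul_prod hf.integrable).add (hf.integrable.mul_prod hf.moment)).const_mul
    2⁻¹).sub (hf.integrable_interaction hf)).congr (.of_forall fun p => ?_)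
  simp only [screenedInteraction, Pi.sub_apply, Pi.add_apply]
  ring

lemma FiniteEntropyMoment.integral_screenedInteraction (hf : FiniteEntropyMoment μ f) :
    ∫ p, screenedInteraction f p ∂μ.prod μ =
      (∫ x, f x ∂μ) * (∫ x, logWeight x * f x ∂μ) - logInteraction μ f := by
  have hleft := hf.moment.mul_prod hf.integrable
  have hright := hf.integrable.mul_prod hf.moment
  have hsplit (p : E × E) : screenedInteraction f p =
      2⁻¹ * (logWeight p.1 * f p.1 * f p.2 + f p.1 * (logWeight p.2 * f p.2)) -
        f p.1 * f p.2 * log ‖p.1 - p.2‖ := by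
    simp only [screenedInteraction]
    ring
  simp_rw [hsplit]
  rw [integral_sub (by exact (hleft.add hright).const_mul 2⁻¹) (hf.integrable_interaction hf),
    integral_const_mul, integral_add hleft hright,
    integral_prod_mul (fun x => logWeight x * f x) f,
    integral_prod_mul f fun x => logWeight x * f x, logInteraction]
  ring

lemma FiniteEntropyMoment.confinedEnergy_ne_top (hf : FiniteEntropyMoment μ f)
    (hc : (finrank ℝ E : ℝ) / 2 < c) : confinedEnergy μ b c κ f ≠ ⊤ :=
  ENNReal.add_ne_top.2 ⟨(hf.integrable_localEnergy hc).lintegral_lt_top.ne,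
    (hf.integrable_screenedInteraction.const_mul b).lintegral_lt_top.ne⟩

lemma logFreeEnergy_eq_of_mem_densitiesOfMass (hf : f ∈ densitiesOfMass μ M) (hb : 0 ≤ b)
    (hc : (finrank ℝ E : ℝ) / 2 < c) (hκ : c ≤ a - b * M) :
    logFreeEnergy μ a b f = (confinedEnergy μ b c (a - b * M) f).toReal +
      (M - ∫ x, exp (-(c * logWeight x)) ∂μ) := by
  obtain ⟨hf, hfM⟩ := hf
  have hlocal : 0 ≤ᵐ[μ] localEnergy c (a - b * M) f :=
    hf.nonneg.mono fun x hfx => localEnergy_nonneg hκ hfx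
  have hscreened : 0 ≤ᵐ[μ.prod μ] fun p => b * screenedInteraction f p :=
    (screenedInteraction_nonneg hf.nonneg).mono fun p hp => mul_nonneg hb hp
  have hfinite := ENNReal.add_ne_top.1 (hf.confinedEnergy_ne_top (b := b) (κ := a - b * M) hc)
  rw [confinedEnergy, ENNReal.toReal_add hfinite.1 hfinite.2,
    ← integral_eq_lintegral_of_nonneg_ae hlocal (hf.integrable_localEnergy hc).1,
    ← integral_eq_lintegral_of_nonneg_ae hscreened
      (hf.integrable_screenedInteraction.const_mul b).1,
    integral_const_mul, hf.integral_localEnergy hc, hf.integral_screenedInteraction, hfM,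
    logFreeEnergy]
  ring

omit [Nontrivial E] in
lemma finiteEntropyMoment_of_confinedEnergy_ne_top (hfm : Measurable f) (hf0 : 0 ≤ᵐ[μ] f)
    (hf : Integrable f μ) (hc : (finrank ℝ E : ℝ) / 2 < c) (hκ : c < κ)
    (hfinite : confinedEnergy μ b c κ f ≠ ⊤) : FiniteEntropyMoment μ f := by
  have hlocal : Integrable (localEnergy c κ f) μ := by
    refine (lintegral_ofReal_ne_top_iff_integrable ?_
      (hf0.mono fun x hfx => localEnergy_nonneg hκ.le hfx)).1 (ENNReal.add_ne_top.1 hfinite).1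
    unfold localEnergy
    fun_prop
  have hmoment : Integrable (fun x => logWeight x * f x) μ := by
    refine (hlocal.const_mul (κ - c)⁻¹).mono' (by fun_prop) ?_
    filter_upwards [hf0] with x hfx
    rw [Real.norm_of_nonneg (mul_nonneg (logWeight_nonneg x) hfx), le_inv_mul_iff₀ (sub_pos.2 hκ)]
    exact sub_mul_le_localEnergy hfx
  refine ⟨hfm, hf0, hf, ?_, hmoment⟩
  refine (((hlocal.sub (integrable_exp_neg_mul_logWeight hc)).add hf).sub
    (hmoment.const_mul κ)).congr (.of_forall fun x => ?_)
  simp only [localEnergy, Pi.sub_apply, Pi.add_apply]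
  ring

lemma mem_densitiesOfMass_and_logFreeEnergy_le_of_tendsto (hb : 0 ≤ b)
    (hκ : (finrank ℝ E : ℝ) / 2 < a - b * M) {f : ℕ → E → ℝ} {m : ℝ}
    (hf : ∀ n, f n ∈ densitiesOfMass μ M)
    (hfm : Tendsto (fun n => logFreeEnergy μ a b (f n)) atTop (𝓝 m)) (hg : Measurable g)
    (hg_int : Integrable g μ) (hgM : ∫ x, g x ∂μ = M)
    (hfg : ∀ᵐ x ∂μ, Tendsto (fun n => f n x) atTop (𝓝 (g x))) :
    g ∈ densitiesOfMass μ M ∧ logFreeEnergy μ a b g ≤ m := by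
  obtain ⟨c, hc, hcκ⟩ := exists_between hκ
  set C := M - ∫ x, exp (-(c * logWeight x)) ∂μ
  have hg0 : 0 ≤ᵐ[μ] g := by
    filter_upwards [hfg, ae_all_iff.2 fun n => (hf n).1.nonneg] with x hx hfx
    exact ge_of_tendsto' hx hfx
  have henergy (n : ℕ) : confinedEnergy μ b c (a - b * M) (f n) =
      ENNReal.ofReal (logFreeEnergy μ a b (f n) - C) := by
    rw [logFreeEnergy_eq_of_mem_densitiesOfMass (hf n) hb hc hcκ.le, add_sub_cancel_right,
      ENNReal.ofReal_toReal ((hf n).1.confinedEnergy_ne_top hc)]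
  have hlsc : confinedEnergy μ b c (a - b * M) g ≤ ENNReal.ofReal (m - C) := by
    refine (confinedEnergy_le_liminf (fun n => (hf n).1.measurable) hfg).trans_eq ?_
    simp_rw [henergy]
    exact (ENNReal.tendsto_ofReal (hfm.sub_const C)).liminf_eq
  have hgF := finiteEntropyMoment_of_confinedEnergy_ne_top hg hg0 hg_int hc hcκ
    (ne_top_of_le_ne_top ENNReal.ofReal_ne_top hlsc)
  have hC : 0 ≤ m - C := ge_of_tendsto' (hfm.sub_const C) fun n => by
    rw [logFreeEnergy_eq_of_mem_densitiesOfMass (hf n) hb hc hcκ.le, add_sub_cancel_right]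
    exact ENNReal.toReal_nonneg
  refine ⟨⟨hgF, hgM⟩, ?_⟩
  rw [logFreeEnergy_eq_of_mem_densitiesOfMass ⟨hgF, hgM⟩ hb hc hcκ.le, ← le_sub_iff_add_le]
  exact ENNReal.toReal_le_of_le_ofReal hC hlsc

lemma bddBelow_logFreeEnergy (hb : 0 ≤ b) (hκ : (finrank ℝ E : ℝ) / 2 < a - b * M) :
    BddBelow (logFreeEnergy μ a b '' densitiesOfMass μ M) := by
  obtain ⟨c, hc, hcκ⟩ := exists_between hκ
  refine ⟨M - ∫ x, exp (-(c * logWeight x)) ∂μ, ?_⟩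
  rintro _ ⟨f, hf, rfl⟩
  rw [logFreeEnergy_eq_of_mem_densitiesOfMass hf hb hc hcκ.le]
  exact le_add_of_nonneg_left ENNReal.toReal_nonneg

end Haar

end FreeEnergy

section DirectMethod

lemma cauchySeq_of_sq_dist_le {X : Type*} [PseudoMetricSpace X] {u : ℕ → X} {e : ℕ → ℝ} {C m : ℝ}
    (hu : ∀ i j, dist (u i) (u j) ^ 2 ≤ C * (e i + e j - 2 * m)) (he : Tendsto e atTop (𝓝 m)) :
    CauchySeq u := by
  have hsum : Tendsto (fun p : ℕ × ℕ => e p.1 + e p.2) atTop (𝓝 (m + m)) := by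
    rw [← prod_atTop_atTop_eq]
    exact (he.comp tendsto_fst).add (he.comp tendsto_snd)
  have hgap : Tendsto (fun p : ℕ × ℕ => √(C * (e p.1 + e p.2 - 2 * m))) atTop (𝓝 0) := by
    have := ((hsum.sub_const (2 * m)).const_mul C).sqrt
    rwa [← two_mul, sub_self, mul_zero, sqrt_zero] at this
  exact cauchySeq_iff_tendsto_dist_atTop_0.2
    (squeeze_zero (fun _ => dist_nonneg) (fun p => le_sqrt_of_sq_le (hu p.1 p.2)) hgap)

lemma dist_toL1_eq_integral_abs_sub {α : Type*} [MeasurableSpace α] {μ : Measure α} {f g : α → ℝ}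
    (hf : Integrable f μ) (hg : Integrable g μ) :
    dist (hf.toL1 f) (hg.toL1 g) = ∫ x, |f x - g x| ∂μ := by
  rw [dist_eq_norm, ← Integrable.toL1_sub, L1.norm_of_fun_eq_integral_norm]
  rfl

lemma exists_subseq_tendsto_ae_of_cauchySeq_toL1 {α : Type*} [MeasurableSpace α] {μ : Measure α}
    {f : ℕ → α → ℝ} (hf : ∀ n, Integrable (f n) μ)
    (hcauchy : CauchySeq fun n => (hf n).toL1 (f n)) :
    ∃ g, Measurable g ∧ Integrable g μ ∧
      Tendsto (fun n => ∫ x, f n x ∂μ) atTop (𝓝 (∫ x, g x ∂μ)) ∧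
      ∃ ns : ℕ → ℕ, StrictMono ns ∧
        ∀ᵐ x ∂μ, Tendsto (fun n => f (ns n) x) atTop (𝓝 (g x)) := by
  obtain ⟨g, hg⟩ := cauchySeq_tendsto_of_complete hcauchy
  obtain ⟨ns, hns, hae⟩ := (tendstoInMeasure_of_tendsto_Lp hg).exists_seq_tendsto_ae
  refine ⟨g, (Lp.stronglyMeasurable g).measurable, L1.integrable_coeFn g, ?_, ns, hns, ?_⟩
  · exact ((continuous_integral.tendsto g).comp hg).congr fun n =>
      integral_congr_ae (hf n).coeFn_toL1
  · filter_upwards [hae, ae_all_iff.2 fun n => (hf n).coeFn_toL1] with x hx hfx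
    exact hx.congr fun n => hfx (ns n)

variable {E : Type*} [NormedAddCommGroup E] [InnerProductSpace ℝ E] [FiniteDimensional ℝ E]
  [Nontrivial E] [MeasurableSpace E] [BorelSpace E] {μ : Measure E} [μ.IsAddHaarMeasure]
  {f g : E → ℝ} {a b M : ℝ}

lemma logInteraction_add_le_two_mul_midpoint (hf : FiniteEntropyMoment μ f)
    (hg : FiniteEntropyMoment μ g) (hfg : ∫ x, f x ∂μ = ∫ x, g x ∂μ) :
    logInteraction μ f + logInteraction μ g ≤
      2 * logInteraction μ fun x => 2⁻¹ * (f x + g x) := by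
  have hff := hf.integrable_interaction hf
  have hgg := hg.integrable_interaction hg
  have hmid := (hf.midpoint hg).integrable_interaction (hf.midpoint hg)
  have hexpand (p : E × E) : (f - g) p.1 * (f - g) p.2 * log ‖p.1 - p.2‖ =
      2 * (f p.1 * f p.2 * log ‖p.1 - p.2‖ + g p.1 * g p.2 * log ‖p.1 - p.2‖) -
        4 * (2⁻¹ * (f p.1 + g p.1) * (2⁻¹ * (f p.2 + g p.2)) * log ‖p.1 - p.2‖) := by
    simp only [Pi.sub_apply]
    ring
  have hsum := (hff.add hgg).const_mul 2
  have hnonpos := integral_mul_mul_log_norm_sub_nonpos (hf.integrable.sub hg.integrable)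
    (by rw [integral_sub' hf.integrable hg.integrable, hfg, sub_self])
    ((hsum.sub (hmid.const_mul 4)).congr (.of_forall fun p => (hexpand p).symm))
  simp_rw [hexpand] at hnonpos
  rw [integral_sub (by exact hsum) (hmid.const_mul 4), integral_const_mul, integral_const_mul,
    integral_add hff hgg] at hnonpos
  simp only [logInteraction]
  linarith

lemma sq_integral_abs_sub_le_logFreeEnergy_midpoint_gap (hb : 0 ≤ b)
    (hf : f ∈ densitiesOfMass μ M) (hg : g ∈ densitiesOfMass μ M) :
    (∫ x, |f x - g x| ∂μ) ^ 2 ≤ 8 * M * (logFreeEnergy μ a b f + logFreeEnergy μ a b g -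
      2 * logFreeEnergy μ a b fun x => 2⁻¹ * (f x + g x)) := by
  obtain ⟨hf, hfM⟩ := hf
  obtain ⟨hg, hgM⟩ := hg
  have hM : 0 ≤ M := hfM ▸ integral_nonneg_of_ae hf.nonneg
  have hmoment : 2 * ∫ x, logWeight x * (2⁻¹ * (f x + g x)) ∂μ =
      (∫ x, logWeight x * f x ∂μ) + ∫ x, logWeight x * g x ∂μ := by
    rw [← integral_add hf.moment hg.moment, ← integral_const_mul]
    congr 1 with x
    ring
  have hinteraction := mul_le_mul_of_nonneg_left
    (logInteraction_add_le_two_mul_midpoint hf hg (hfM.trans hgM.symm)) hb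
  refine (sq_integral_abs_sub_le_mul_log_midpoint_gap hf.integrable hg.integrable hf.nonneg
    hg.nonneg hf.entropy hg.entropy).trans ?_
  rw [hfM, hgM, show 4 * (M + M) = 8 * M by ring]
  refine mul_le_mul_of_nonneg_left ?_ (by positivity)
  simp only [logFreeEnergy]
  linear_combination hinteraction + a * hmoment

lemma cauchySeq_toL1_of_tendsto_logFreeEnergy (hb : 0 ≤ b) {f : ℕ → E → ℝ} {m : ℝ}
    (hf : ∀ n, f n ∈ densitiesOfMass μ M)
    (hm : m ∈ lowerBounds (logFreeEnergy μ a b '' densitiesOfMass μ M))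
    (hfm : Tendsto (fun n => logFreeEnergy μ a b (f n)) atTop (𝓝 m)) :
    CauchySeq fun n => (hf n).1.integrable.toL1 (f n) := by
  have hM : 0 ≤ M := (hf 0).2 ▸ integral_nonneg_of_ae (hf 0).1.nonneg
  refine cauchySeq_of_sq_dist_le (C := 8 * M) (fun i j => ?_) hfm
  have hmid := hm (Set.mem_image_of_mem _ (midpoint_mem_densitiesOfMass (hf i) (hf j)))
  rw [dist_toL1_eq_integral_abs_sub]
  refine (sq_integral_abs_sub_le_logFreeEnergy_midpoint_gap (a := a) hb (hf i) (hf j)).trans ?_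
  gcongr

theorem exists_isMinOn_logFreeEnergy (hM : 0 ≤ M) (hb : 0 ≤ b)
    (hκ : (Module.finrank ℝ E : ℝ) / 2 < a - b * M) :
    ∃ f ∈ densitiesOfMass μ M, IsMinOn (logFreeEnergy μ a b) (densitiesOfMass μ M) f := by
  set m := sInf (logFreeEnergy μ a b '' densitiesOfMass μ M)
  have hbdd := bddBelow_logFreeEnergy (μ := μ) hb hκ
  have hm : m ∈ lowerBounds (logFreeEnergy μ a b '' densitiesOfMass μ M) :=
    fun _ hv => csInf_le hbdd hv
  obtain ⟨u, -, hu, hmem⟩ :=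
    exists_seq_tendsto_sInf ((densitiesOfMass_nonempty μ hM).image (logFreeEnergy μ a b)) hbdd
  choose f hf hfu using hmem
  have hfm : Tendsto (fun n => logFreeEnergy μ a b (f n)) atTop (𝓝 m) :=
    hu.congr fun n => (hfu n).symm
  obtain ⟨g, hg_meas, hg_int, hfg, ns, hns, hae⟩ := exists_subseq_tendsto_ae_of_cauchySeq_toL1 _
    (cauchySeq_toL1_of_tendsto_logFreeEnergy hb hf hm hfm)
  have hgM : ∫ x, g x ∂μ = M :=
    tendsto_nhds_unique hfg (tendsto_const_nhds.congr fun n => (hf n).2.symm)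
  obtain ⟨hg, hg_le⟩ := mem_densitiesOfMass_and_logFreeEnergy_le_of_tendsto hb hκ
    (fun n => hf (ns n)) (hfm.comp hns.tendsto_atTop) hg_meas hg_int hgM hae
  exact ⟨g, hg, fun f hf => hg_le.trans (hm (Set.mem_image_of_mem _ hf))⟩

end DirectMethod

section Plane

variable {f : E2 → ℝ}

lemma Vpot_eq_add_logWeight (x : E2) : Vpot x = 2 * logWeight x + log π := rfl

lemma admissible_iff_finiteEntropyMoment : Admissible f ↔ FiniteEntropyMoment volume f := by
  refine ⟨fun ⟨hmeas, hnonneg, hint, hentropy, hV, _⟩ => ?_, fun hf => ?_⟩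
  · refine ⟨hmeas, hnonneg, hint, hentropy.mono (by fun_prop) (.of_forall fun x => by simp),
      ((hV.sub (hint.const_mul (log π))).const_mul 2⁻¹).congr (.of_forall fun x => ?_)⟩
    simp only [Vpot_eq_add_logWeight, Pi.sub_apply]
    ring
  · have := hf.measurable
    refine ⟨hf.measurable, hf.nonneg, hf.integrable,
      hf.entropy.mono (by fun_prop) (.of_forall fun x => by simp),
      ((hf.moment.const_mul 2).add (hf.integrable.const_mul (log π))).congr
        (.of_forall fun x => ?_),
      (hf.integrable_interaction hf).mono (by fun_prop) (.of_forall fun p => by simp)⟩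
    simp only [Vpot_eq_add_logWeight, Pi.add_apply]
    ring

lemma Fplus_eq_logFreeEnergy (β : ℝ) (hf : FiniteEntropyMoment volume f) :
    Fplus β f = logFreeEnergy volume (2 * β) (1 / (4 * π)) f + β * log π * ∫ x, f x := by
  have hV : ∫ x, Vpot x * f x = 2 * (∫ x, logWeight x * f x) + log π * ∫ x, f x := by
    rw [← integral_const_mul, ← integral_const_mul,
      ← integral_add (hf.moment.const_mul _) (hf.integrable.const_mul _)]
    congr 1 with x
    rw [Vpot_eq_add_logWeight]
    ring
  rw [Fplus, hV, logFreeEnergy, logInteraction, Measure.volume_eq_prod]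
  ring

theorem Fplus_minimizer_exists_general (M β : ℝ) (hM : 0 ≤ M) (hβ : 1 / 2 + M / (8 * π) < β) :
    ∃ f₀ : E2 → ℝ, Admissible f₀ ∧ (∫ x, f₀ x) = M ∧
      ∀ f : E2 → ℝ, Admissible f → (∫ x, f x) = M → Fplus β f₀ ≤ Fplus β f := by
  have hκ : (Module.finrank ℝ E2 : ℝ) / 2 < 2 * β - 1 / (4 * π) * M := by
    rw [finrank_euclideanSpace_fin]
    linear_combination 2 * hβ
  obtain ⟨f₀, ⟨hf₀, hf₀M⟩, hmin⟩ :=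
    exists_isMinOn_logFreeEnergy (μ := volume) hM (by positivity : 0 ≤ 1 / (4 * π)) hκ
  refine ⟨f₀, admissible_iff_finiteEntropyMoment.2 hf₀, hf₀M, fun f hf hfM => ?_⟩
  have hf := admissible_iff_finiteEntropyMoment.1 hf
  rw [Fplus_eq_logFreeEnergy β hf₀, Fplus_eq_logFreeEnergy β hf, hf₀M, hfM]
  exact add_le_add_left (hmin ⟨hf, hfM⟩) _

end Plane

/-- The repulsive free energy F⁺_β attains its infimum when β ≥ 1 + M/(8π). -/
theorem Fplus_minimizer_exists (M β : ℝ) (hM : 0 < M) (hβ : β ≥ 1 + M / (8 * π)) :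
    ∃ f₀ : E2 → ℝ, Admissible f₀ ∧ (∫ x, f₀ x) = M ∧
      ∀ f : E2 → ℝ, Admissible f → (∫ x, f x) = M → Fplus β f₀ ≤ Fplus β f :=
  Fplus_minimizer_exists_general M β hM.le (by linarith)
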